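/- arXiv:math-ph/0612083 — 2 statements merged into one kernel-verified Lean document; each statement's English description precedes it below -/
import Mathlib

section
/- Let f(n) = t(n) + 4g(n) + 3h(n) + 6p(n) + q(n), and write s(n) = t(n) + 2g(n) + h(n) + p(n) and u(n) = t(n) + g(n). Then for every natural number n, f(n+1) = f(n)^4 − 4 f(n) s(n)^3 − 3 s(n)^4 + 12 s(n)^2 u(n)^2 − 6 u(n)^4. -/
/-!
`SG_3(n + 1)` consists of four copies of `SG_3(n)`, any two of which share one junction vertex, so
the copies sit at the vertices of a `K₄` whose edges are the junctions. A spanning forest of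
`SG_3(n + 1)` is a quadruple of spanning forests of the copies whose union has no cycle, and whether
it has one depends only on how each copy joins its three junctions: all three (`a` forests), one
prescribed pair (`b` forests), or none (`c` forests). In terms of the corner classes,
`a = t + g`, `b = g + h + p` and `c = 3p + q`, hence `u = a`, `s = a + b` and `f = a + 3b + c`.

A cycle in the union follows a cycle of `K₄`, that is, one of 4 triangles or 3 squares, and any two
of these cover either one of the 6 theta graphs (`K₄` minus an edge) or all of `K₄`. Prescribing
that a quadruple contains a given triangle, square, theta graph or the whole `K₄` leaves `f s³`,
`s⁴`, `s² u²` or `u⁴` choices. Möbius inversion over these unions of cycles isolates the acyclic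
quadruples.
-/

section Gluings

variable {R : Type*}

section CommSemiring

variable [CommSemiring R]

/-- Number of quadruples of forests whose union is acyclic, when `a`, `b`, `c` forests of each copy
join all three junctions, one prescribed pair, none of them. The summands correspond to two, one and
no copies joining all three junctions; three such copies form a triangle. The coefficients are
`24 = 3 (9 - 1)`, `14 = 27 - (3 · 3 + 1 + 3)`, `104 = 4 (27 - 1)` and `66 = 81 - (4 · 3 + 3)`,
the subtracted numbers counting triangles and squares. -/
def acyclicGluings (a b c : R) : R :=
  6 * a ^ 2 * (c ^ 2 + 4 * b * c)
    + 4 * a * (c ^ 3 + 9 * b * c ^ 2 + 24 * b ^ 2 * c + 14 * b ^ 3)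
    + (c ^ 4 + 12 * b * c ^ 3 + 54 * b ^ 2 * c ^ 2 + 104 * b ^ 3 * c + 66 * b ^ 4)

/-- Number of quadruples whose only cycle is a given triangle of `K₄`; the summands correspond to
the copy off the triangle joining none, two or all three of its junctions. In the last two cases,
two copies that are joined to it and themselves join all three junctions would close a second
cycle. -/
def triangleGluings (a b c : R) : R :=
  c * (a + b) ^ 3 + 3 * b * ((a + b) * (b ^ 2 + 2 * a * b)) + a * (b ^ 3 + 3 * a * b ^ 2)

/-- Number of quadruples whose only cycle is a given square of `K₄`; opposite copies cannot both
join all three junctions, as the diagonal between them would close a second cycle. -/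
def squareGluings (a b : R) : R :=
  (b ^ 2 + 2 * a * b) ^ 2

/-- Number of quadruples whose cycles cover exactly a given theta graph of `K₄`: the copies of
degree three join all three junctions, those of degree two do not both. -/
def thetaGluings (a b : R) : R :=
  a ^ 2 * (b ^ 2 + 2 * a * b)

theorem sq_mul_sq_eq_thetaGluings_add (a b : R) :
    (a + b) ^ 2 * a ^ 2 = thetaGluings a b + a ^ 4 := by
  unfold thetaGluings
  ring

-- A square lies in two theta graphs, one for each of its diagonals.
theorem pow_four_eq_squareGluings_add (a b : R) :
    (a + b) ^ 4 = squareGluings a b + 2 * thetaGluings a b + a ^ 4 := by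
  unfold squareGluings thetaGluings
  ring

-- A triangle lies in three theta graphs, each omitting an edge at the fourth vertex.
theorem mul_pow_three_eq_triangleGluings_add (a b c : R) :
    (a + 3 * b + c) * (a + b) ^ 3 =
      triangleGluings a b c + 3 * thetaGluings a b + a ^ 4 := by
  unfold triangleGluings thetaGluings
  ring

theorem pow_four_eq_acyclicGluings_add (a b c : R) :
    (a + 3 * b + c) ^ 4 =
      acyclicGluings a b c + 4 * triangleGluings a b c + 3 * squareGluings a b
        + 6 * thetaGluings a b + a ^ 4 := by
  unfold acyclicGluings triangleGluings squareGluings thetaGluings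
  ring

end CommSemiring

theorem acyclicGluings_eq_moebius [CommRing R] (a b c : R) :
    acyclicGluings a b c =
      (a + 3 * b + c) ^ 4 - 4 * ((a + 3 * b + c) * (a + b) ^ 3) - 3 * (a + b) ^ 4
        + 12 * ((a + b) ^ 2 * a ^ 2) - 6 * a ^ 4 := by
  rw [pow_four_eq_acyclicGluings_add, mul_pow_three_eq_triangleGluings_add,
    pow_four_eq_squareGluings_add, sq_mul_sq_eq_thetaGluings_add]
  ring

end Gluings

/-- Numbers of spanning forests of a graph with four interchangeable corners, by the partition of
the corners among the trees. As in the paper, each field counts one labelled partition: `t` all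
four together, `g` a given corner apart from the other three, `h` two given pairs, `p` only a given
pair together, `q` all apart. -/
structure CornerCounts (R : Type*) where
  t : R
  g : R
  h : R
  p : R
  q : R

namespace CornerCounts

variable {R : Type*} [CommSemiring R] (x : CornerCounts R)

/-- The paper's `f`: the number of all spanning forests. -/
def total : R := x.t + 4 * x.g + 3 * x.h + 6 * x.p + x.q

/-- The paper's `s`: the number of spanning forests joining two given corners. -/
def pairJoined : R := x.t + 2 * x.g + x.h + x.p

/-- The paper's `u`: the number of spanning forests joining three given corners. -/
def tripleJoined : R := x.t + x.g

/-- The number of spanning forests joining two given corners but not a given third one. -/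
def onlyPairJoined : R := x.g + x.h + x.p

/-- The number of spanning forests keeping three given corners in different trees. -/
def tripleSeparated : R := 3 * x.p + x.q

/-- The recursion from the counts for `SG_3(n)` to those for `SG_3(n + 1)`. -/
def next : CornerCounts R where
  t :=
    72 * x.t ^ 2 * x.p * (x.g + x.h) + 56 * x.t * (x.g + x.h) ^ 3
    + 24 * x.t ^ 2 * x.p ^ 2
    + 12 * x.t * x.p * (11 * x.g ^ 2 + 12 * x.g * x.h + x.h ^ 2)
    + 12 * x.g ^ 2 * (3 * x.g ^ 2 + 8 * x.g * x.h + 6 * x.h ^ 2)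
    + 12 * x.t * x.p ^ 2 * (4 * x.g + x.h) + 48 * x.g ^ 2 * x.p * (x.g + x.h)
    + 4 * x.t * x.p ^ 3 + 12 * x.g ^ 2 * x.p ^ 2
  g :=
    6 * x.t ^ 2 * x.q * (x.g + x.h) + 24 * x.t ^ 2 * x.p ^ 2
    + 12 * x.t * x.p * (9 * x.g ^ 2 + 16 * x.g * x.h + 7 * x.h ^ 2)
    + 4 * x.g * (5 * x.g ^ 3 + 18 * x.g ^ 2 * x.h + 24 * x.g * x.h ^ 2 + 14 * x.h ^ 3)
    + 6 * x.t ^ 2 * x.p * x.q + 6 * x.t * x.p ^ 2 * (21 * x.g + 11 * x.h)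
    + 3 * x.t * x.q * (5 * x.g ^ 2 + 6 * x.g * x.h + x.h ^ 2)
    + 24 * x.g * x.p * (5 * x.g ^ 2 + 9 * x.g * x.h + 4 * x.h ^ 2)
    + 6 * x.t * x.p * x.q * (3 * x.g + x.h) + 21 * x.t * x.p ^ 3
    + 6 * x.g * x.p ^ 2 * (19 * x.g + 13 * x.h)
    + 3 * x.g * x.q * (3 * x.g ^ 2 + 4 * x.g * x.h + x.h ^ 2)
    + 3 * x.t * x.p ^ 2 * x.q + 6 * x.g * x.p * x.q * (2 * x.g + x.h)
    + 25 * x.g * x.p ^ 3 + 3 * x.g * x.p ^ 2 * x.q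
  h :=
    2 * x.t ^ 2 * x.p ^ 2
    + 12 * x.t * x.p * (x.g ^ 2 + 4 * x.g * x.h + 3 * x.h ^ 2)
    + 2 * (x.g ^ 4 + 8 * x.g ^ 3 * x.h + 18 * x.g ^ 2 * x.h ^ 2
        + 16 * x.g * x.h ^ 3 + 11 * x.h ^ 4)
    + 8 * x.t * x.p ^ 2 * (2 * x.g + 3 * x.h)
    + 8 * x.p * (2 * x.g ^ 3 + 9 * x.g ^ 2 * x.h + 9 * x.g * x.h ^ 2 + 2 * x.h ^ 3)
    + 4 * x.t * x.p ^ 3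
    + 2 * x.p ^ 2 * (10 * x.g ^ 2 + 24 * x.g * x.h + 9 * x.h ^ 2)
    + 8 * x.p ^ 3 * (x.g + x.h) + x.p ^ 4
  p :=
    6 * x.t ^ 2 * x.p * x.q + 120 * x.t * x.p ^ 2 * (x.g + x.h)
    + 14 * x.t * x.q * (x.g + x.h) ^ 2 + 88 * x.p * (x.g + x.h) ^ 3
    + 4 * x.t * x.p * x.q * (13 * x.g + 10 * x.h) + 78 * x.t * x.p ^ 3
    + 6 * x.p ^ 2 * (49 * x.g ^ 2 + 78 * x.g * x.h + 29 * x.h ^ 2)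
    + 2 * x.q * (11 * x.g ^ 3 + 26 * x.g ^ 2 * x.h + 19 * x.g * x.h ^ 2 + 4 * x.h ^ 3)
    + x.t ^ 2 * x.q ^ 2 + 2 * x.t * x.q ^ 2 * (2 * x.g + x.h)
    + 26 * x.t * x.p ^ 2 * x.q
    + 2 * x.p * x.q * (38 * x.g ^ 2 + 50 * x.g * x.h + 15 * x.h ^ 2)
    + 2 * x.p ^ 3 * (115 * x.g + 76 * x.h) + 2 * x.t * x.p * x.q ^ 2
    + x.q ^ 2 * (4 * x.g ^ 2 + 4 * x.g * x.h + x.h ^ 2)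
    + 2 * x.p ^ 2 * x.q * (31 * x.g + 18 * x.h) + 49 * x.p ^ 4
    + 2 * x.p * x.q ^ 2 * (2 * x.g + x.h) + 14 * x.p ^ 3 * x.q + x.p ^ 2 * x.q ^ 2
  q :=
    144 * x.t * x.p * x.q * (x.g + x.h) + 208 * x.t * x.p ^ 3
    + 720 * x.p ^ 2 * (x.g + x.h) ^ 2 + 56 * x.q * (x.g + x.h) ^ 3
    + 24 * x.t * x.q ^ 2 * (x.g + x.h) + 252 * x.t * x.p ^ 2 * x.q
    + 24 * x.p * x.q * (25 * x.g ^ 2 + 44 * x.g * x.h + 19 * x.h ^ 2)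
    + 104 * x.p ^ 3 * (17 * x.g + 15 * x.h) + 60 * x.t * x.p * x.q ^ 2
    + 24 * x.q ^ 2 * (3 * x.g ^ 2 + 5 * x.g * x.h + 2 * x.h ^ 2)
    + 12 * x.p ^ 2 * x.q * (110 * x.g + 89 * x.h) + 972 * x.p ^ 4
    + 4 * x.t * x.q ^ 3 + 12 * x.p * x.q ^ 2 * (22 * x.g + 17 * x.h)
    + 776 * x.p ^ 3 * x.q + 4 * x.q ^ 3 * (4 * x.g + 3 * x.h)
    + 210 * x.p ^ 2 * x.q ^ 2 + 24 * x.p * x.q ^ 3 + x.q ^ 4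

theorem pairJoined_eq : x.pairJoined = x.tripleJoined + x.onlyPairJoined := by
  unfold pairJoined tripleJoined onlyPairJoined
  ring

theorem total_eq :
    x.total = x.tripleJoined + 3 * x.onlyPairJoined + x.tripleSeparated := by
  unfold total tripleJoined onlyPairJoined tripleSeparated
  ring

theorem total_next :
    x.next.total = acyclicGluings x.tripleJoined x.onlyPairJoined x.tripleSeparated := by
  unfold total next acyclicGluings tripleJoined onlyPairJoined tripleSeparated
  ring

end CornerCounts

theorem sg3_f_recursion_general {R : Type*} [CommRing R] (x : CornerCounts R) :
    x.next.total =
      x.total ^ 4 - 4 * x.total * x.pairJoined ^ 3 - 3 * x.pairJoined ^ 4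
        + 12 * x.pairJoined ^ 2 * x.tripleJoined ^ 2 - 6 * x.tripleJoined ^ 4 := by
  rw [x.total_next, acyclicGluings_eq_moebius, x.total_eq, x.pairJoined_eq]
  ring

/-- For the spanning-forest counting sequences on the three-dimensional Sierpinski gasket
`SG_3(n)`, with `s(n) = t(n)+2g(n)+h(n)+p(n)` and `u(n) = t(n)+g(n)`, the total count
satisfies `f(n+1) = f(n)^4 - 4 f(n) s(n)^3 - 3 s(n)^4 + 12 s(n)^2 u(n)^2 - 6 u(n)^4`. -/
theorem sg3_f_recursion
    (t g h p q f : ℕ → ℕ)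
    (ht0 : t 0 = 16) (hg0 : g 0 = 3) (hh0 : h 0 = 1) (hp0 : p 0 = 1) (hq0 : q 0 = 1)
    (ht : ∀ n, t (n + 1) =
        72 * t n ^ 2 * p n * (g n + h n) + 56 * t n * (g n + h n) ^ 3
        + 24 * t n ^ 2 * p n ^ 2
        + 12 * t n * p n * (11 * g n ^ 2 + 12 * g n * h n + h n ^ 2)
        + 12 * g n ^ 2 * (3 * g n ^ 2 + 8 * g n * h n + 6 * h n ^ 2)
        + 12 * t n * p n ^ 2 * (4 * g n + h n) + 48 * g n ^ 2 * p n * (g n + h n)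
        + 4 * t n * p n ^ 3 + 12 * g n ^ 2 * p n ^ 2)
    (hg : ∀ n, g (n + 1) =
        6 * t n ^ 2 * q n * (g n + h n) + 24 * t n ^ 2 * p n ^ 2
        + 12 * t n * p n * (9 * g n ^ 2 + 16 * g n * h n + 7 * h n ^ 2)
        + 4 * g n * (5 * g n ^ 3 + 18 * g n ^ 2 * h n + 24 * g n * h n ^ 2 + 14 * h n ^ 3)
        + 6 * t n ^ 2 * p n * q n + 6 * t n * p n ^ 2 * (21 * g n + 11 * h n)
        + 3 * t n * q n * (5 * g n ^ 2 + 6 * g n * h n + h n ^ 2)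
        + 24 * g n * p n * (5 * g n ^ 2 + 9 * g n * h n + 4 * h n ^ 2)
        + 6 * t n * p n * q n * (3 * g n + h n) + 21 * t n * p n ^ 3
        + 6 * g n * p n ^ 2 * (19 * g n + 13 * h n)
        + 3 * g n * q n * (3 * g n ^ 2 + 4 * g n * h n + h n ^ 2)
        + 3 * t n * p n ^ 2 * q n + 6 * g n * p n * q n * (2 * g n + h n)
        + 25 * g n * p n ^ 3 + 3 * g n * p n ^ 2 * q n)
    (hh : ∀ n, h (n + 1) =
        2 * t n ^ 2 * p n ^ 2
        + 12 * t n * p n * (g n ^ 2 + 4 * g n * h n + 3 * h n ^ 2)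
        + 2 * (g n ^ 4 + 8 * g n ^ 3 * h n + 18 * g n ^ 2 * h n ^ 2
            + 16 * g n * h n ^ 3 + 11 * h n ^ 4)
        + 8 * t n * p n ^ 2 * (2 * g n + 3 * h n)
        + 8 * p n * (2 * g n ^ 3 + 9 * g n ^ 2 * h n + 9 * g n * h n ^ 2 + 2 * h n ^ 3)
        + 4 * t n * p n ^ 3
        + 2 * p n ^ 2 * (10 * g n ^ 2 + 24 * g n * h n + 9 * h n ^ 2)
        + 8 * p n ^ 3 * (g n + h n) + p n ^ 4)
    (hp : ∀ n, p (n + 1) =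
        6 * t n ^ 2 * p n * q n + 120 * t n * p n ^ 2 * (g n + h n)
        + 14 * t n * q n * (g n + h n) ^ 2 + 88 * p n * (g n + h n) ^ 3
        + 4 * t n * p n * q n * (13 * g n + 10 * h n) + 78 * t n * p n ^ 3
        + 6 * p n ^ 2 * (49 * g n ^ 2 + 78 * g n * h n + 29 * h n ^ 2)
        + 2 * q n * (11 * g n ^ 3 + 26 * g n ^ 2 * h n + 19 * g n * h n ^ 2 + 4 * h n ^ 3)
        + t n ^ 2 * q n ^ 2 + 2 * t n * q n ^ 2 * (2 * g n + h n)
        + 26 * t n * p n ^ 2 * q n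
        + 2 * p n * q n * (38 * g n ^ 2 + 50 * g n * h n + 15 * h n ^ 2)
        + 2 * p n ^ 3 * (115 * g n + 76 * h n) + 2 * t n * p n * q n ^ 2
        + q n ^ 2 * (4 * g n ^ 2 + 4 * g n * h n + h n ^ 2)
        + 2 * p n ^ 2 * q n * (31 * g n + 18 * h n) + 49 * p n ^ 4
        + 2 * p n * q n ^ 2 * (2 * g n + h n) + 14 * p n ^ 3 * q n + p n ^ 2 * q n ^ 2)
    (hq : ∀ n, q (n + 1) =
        144 * t n * p n * q n * (g n + h n) + 208 * t n * p n ^ 3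
        + 720 * p n ^ 2 * (g n + h n) ^ 2 + 56 * q n * (g n + h n) ^ 3
        + 24 * t n * q n ^ 2 * (g n + h n) + 252 * t n * p n ^ 2 * q n
        + 24 * p n * q n * (25 * g n ^ 2 + 44 * g n * h n + 19 * h n ^ 2)
        + 104 * p n ^ 3 * (17 * g n + 15 * h n) + 60 * t n * p n * q n ^ 2
        + 24 * q n ^ 2 * (3 * g n ^ 2 + 5 * g n * h n + 2 * h n ^ 2)
        + 12 * p n ^ 2 * q n * (110 * g n + 89 * h n) + 972 * p n ^ 4
        + 4 * t n * q n ^ 3 + 12 * p n * q n ^ 2 * (22 * g n + 17 * h n)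
        + 776 * p n ^ 3 * q n + 4 * q n ^ 3 * (4 * g n + 3 * h n)
        + 210 * p n ^ 2 * q n ^ 2 + 24 * p n * q n ^ 3 + q n ^ 4)
    (hf : ∀ n, f n = t n + 4 * g n + 3 * h n + 6 * p n + q n) :
    ∀ n, (f (n + 1) : ℤ) =
      (f n : ℤ) ^ 4
      - 4 * (f n : ℤ) * ((t n : ℤ) + 2 * (g n : ℤ) + (h n : ℤ) + (p n : ℤ)) ^ 3
      - 3 * ((t n : ℤ) + 2 * (g n : ℤ) + (h n : ℤ) + (p n : ℤ)) ^ 4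
      + 12 * ((t n : ℤ) + 2 * (g n : ℤ) + (h n : ℤ) + (p n : ℤ)) ^ 2
          * ((t n : ℤ) + (g n : ℤ)) ^ 2
      - 6 * ((t n : ℤ) + (g n : ℤ)) ^ 4 := by
  intro n
  have total_step := sg3_f_recursion_general (⟨t n, g n, h n, p n, q n⟩ : CornerCounts ℤ)
  simpa [CornerCounts.total, CornerCounts.pairJoined, CornerCounts.tripleJoined,
    CornerCounts.next, hf, ht, hg, hh, hp, hq] using total_step
end

section
/- The limit z := lim_{n→∞} ln f(n) / (2 (4^n + 1)) exists, and for every integer m ≥ 1 it satisfies the strict bounds (1/(2·4^m)) · ln q(m) < z < (1/(2·4^m)) · ln f(m). -/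
open Filter

/-!
A spanning forest of `SG_3(n+1)` restricts to a spanning forest on each of its four copies of
`SG_3(n)`, and an arbitrary choice of forests on the copies may close a cycle, so
`f(n+1) < f(n)^4`. Conversely, forests separating all corners glue together without
creating a cycle or joining corners, so `q(n)^4 < q(n+1)`. Algebraically, both inequalities say
that certain polynomials in `t, g, h, p, q` have nonnegative coefficients. After taking logarithms,
`ln q(n) / 4^n` strictly increases below the strictly decreasing `ln f(n) / 4^n`, so the limit of
the latter lies strictly between all terms of the two sequences.
-/

theorem exists_tendsto_between_of_strictMono_of_strictAnti {ι α : Type*} [Nonempty ι]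
    [SemilatticeSup ι] [NoMaxOrder ι] [ConditionallyCompleteLinearOrder α] [TopologicalSpace α]
    [OrderTopology α] {a b : ι → α} (hb : StrictMono b) (ha : StrictAnti a) (hba : b ≤ a) :
    ∃ z, Tendsto a atTop (nhds z) ∧ ∀ i, b i < z ∧ z < a i := by
  have hle (i j : ι) : b i ≤ a j := hb.monotone.forall_le_of_antitone ha.antitone hba i j
  have hbdd : BddBelow (Set.range a) :=
    ⟨b (Classical.arbitrary ι), Set.forall_mem_range.2 (hle _)⟩
  refine ⟨⨅ i, a i, tendsto_atTop_ciInf ha.antitone hbdd, fun i => ?_⟩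
  obtain ⟨j, hij⟩ := exists_gt i
  exact ⟨(hb hij).trans_le (le_ciInf (hle j)), (ciInf_le hbdd j).trans_lt (ha hij)⟩

theorem tendsto_div_add_const {ι 𝕜 : Type*} [Field 𝕜] [LinearOrder 𝕜] [IsStrictOrderedRing 𝕜]
    [TopologicalSpace 𝕜] [OrderTopology 𝕜] {l : Filter ι} {u c : ι → 𝕜} {z : 𝕜}
    (hu : Tendsto (fun i => u i / c i) l (nhds z)) (hc : Tendsto c l atTop) (b : 𝕜) :
    Tendsto (fun i => u i / (c i + b)) l (nhds z) := by
  have hratio : Tendsto (fun i => 1 + b / c i) l (nhds 1) := by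
    simpa using (tendsto_const_nhds (x := b)).div_atTop hc |>.const_add 1
  have hquot : Tendsto (fun i => u i / c i / (1 + b / c i)) l (nhds z) := by
    simpa only [div_one, Pi.div_def] using hu.div hratio one_ne_zero
  refine hquot.congr' ?_
  filter_upwards [hc.eventually_ne_atTop 0] with i hi
  rw [div_div, mul_add, mul_one, mul_div_cancel₀ b hi]

theorem log_pow_div_pow_succ {d : ℕ} (hd : d ≠ 0) (x : ℝ) (n : ℕ) :
    Real.log (x ^ d) / (d : ℝ) ^ (n + 1) = Real.log x / (d : ℝ) ^ n := by
  rw [Real.log_pow, pow_succ', mul_div_mul_left _ _ (Nat.cast_ne_zero.2 hd)]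

theorem strictMono_log_div_pow {d : ℕ} (hd : d ≠ 0) {u : ℕ → ℝ} (hu : ∀ n, 0 < u n)
    (hlt : ∀ n, u n ^ d < u (n + 1)) :
    StrictMono fun n => Real.log (u n) / (d : ℝ) ^ n := by
  refine strictMono_nat_of_lt_succ fun n => ?_
  rw [← log_pow_div_pow_succ hd]
  have := hu n
  gcongr
  exact hlt n

theorem strictAnti_log_div_pow {d : ℕ} (hd : d ≠ 0) {u : ℕ → ℝ} (hu : ∀ n, 0 < u n)
    (hlt : ∀ n, u (n + 1) < u n ^ d) :
    StrictAnti fun n => Real.log (u n) / (d : ℝ) ^ n := by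
  refine strictAnti_nat_of_succ_lt fun n => ?_
  rw [← log_pow_div_pow_succ hd (u n)]
  have := hu (n + 1)
  gcongr
  exact hlt n

/-- The numbers of spanning forests of a stage of the three-dimensional Sierpinski gasket, according
to how the forest connects the four corners: `t` counts the forests joining all four; `g` those
joining three prescribed corners but not the fourth; `h` those joining the corners in two
prescribed separate pairs; `p` those joining only one prescribed pair; `q` those joining none.
The entries live in an arbitrary type, so that the recursion can be run over `ℝ`. -/
structure ForestCounts (R : Type*) where
  t : R
  g : R
  h : R
  p : R
  q : R

namespace ForestCounts

section CommSemiring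

variable {R : Type*} [CommSemiring R]

/-- The number of all spanning forests: the multiplicities are the numbers of ways to prescribe
the partition of the corners. -/
def total : ForestCounts R → R
  | ⟨t, g, h, p, q⟩ => t + 4 * g + 3 * h + 6 * p + q

/-- The recursion expressing the counts for `SG_3(n+1)`, which is glued from four copies of
`SG_3(n)`, by those for `SG_3(n)`. -/
def next : ForestCounts R → ForestCounts R
  | ⟨t, g, h, p, q⟩ =>
    { t :=
        72 * t ^ 2 * p * (g + h) + 56 * t * (g + h) ^ 3
        + 24 * t ^ 2 * p ^ 2
        + 12 * t * p * (11 * g ^ 2 + 12 * g * h + h ^ 2)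
        + 12 * g ^ 2 * (3 * g ^ 2 + 8 * g * h + 6 * h ^ 2)
        + 12 * t * p ^ 2 * (4 * g + h) + 48 * g ^ 2 * p * (g + h)
        + 4 * t * p ^ 3 + 12 * g ^ 2 * p ^ 2
      g :=
        6 * t ^ 2 * q * (g + h) + 24 * t ^ 2 * p ^ 2
        + 12 * t * p * (9 * g ^ 2 + 16 * g * h + 7 * h ^ 2)
        + 4 * g * (5 * g ^ 3 + 18 * g ^ 2 * h + 24 * g * h ^ 2 + 14 * h ^ 3)
        + 6 * t ^ 2 * p * q + 6 * t * p ^ 2 * (21 * g + 11 * h)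
        + 3 * t * q * (5 * g ^ 2 + 6 * g * h + h ^ 2)
        + 24 * g * p * (5 * g ^ 2 + 9 * g * h + 4 * h ^ 2)
        + 6 * t * p * q * (3 * g + h) + 21 * t * p ^ 3
        + 6 * g * p ^ 2 * (19 * g + 13 * h)
        + 3 * g * q * (3 * g ^ 2 + 4 * g * h + h ^ 2)
        + 3 * t * p ^ 2 * q + 6 * g * p * q * (2 * g + h)
        + 25 * g * p ^ 3 + 3 * g * p ^ 2 * q
      h :=
        2 * t ^ 2 * p ^ 2
        + 12 * t * p * (g ^ 2 + 4 * g * h + 3 * h ^ 2)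
        + 2 * (g ^ 4 + 8 * g ^ 3 * h + 18 * g ^ 2 * h ^ 2
            + 16 * g * h ^ 3 + 11 * h ^ 4)
        + 8 * t * p ^ 2 * (2 * g + 3 * h)
        + 8 * p * (2 * g ^ 3 + 9 * g ^ 2 * h + 9 * g * h ^ 2 + 2 * h ^ 3)
        + 4 * t * p ^ 3
        + 2 * p ^ 2 * (10 * g ^ 2 + 24 * g * h + 9 * h ^ 2)
        + 8 * p ^ 3 * (g + h) + p ^ 4
      p :=
        6 * t ^ 2 * p * q + 120 * t * p ^ 2 * (g + h)
        + 14 * t * q * (g + h) ^ 2 + 88 * p * (g + h) ^ 3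
        + 4 * t * p * q * (13 * g + 10 * h) + 78 * t * p ^ 3
        + 6 * p ^ 2 * (49 * g ^ 2 + 78 * g * h + 29 * h ^ 2)
        + 2 * q * (11 * g ^ 3 + 26 * g ^ 2 * h + 19 * g * h ^ 2 + 4 * h ^ 3)
        + t ^ 2 * q ^ 2 + 2 * t * q ^ 2 * (2 * g + h)
        + 26 * t * p ^ 2 * q
        + 2 * p * q * (38 * g ^ 2 + 50 * g * h + 15 * h ^ 2)
        + 2 * p ^ 3 * (115 * g + 76 * h) + 2 * t * p * q ^ 2
        + q ^ 2 * (4 * g ^ 2 + 4 * g * h + h ^ 2)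
        + 2 * p ^ 2 * q * (31 * g + 18 * h) + 49 * p ^ 4
        + 2 * p * q ^ 2 * (2 * g + h) + 14 * p ^ 3 * q + p ^ 2 * q ^ 2
      q :=
        144 * t * p * q * (g + h) + 208 * t * p ^ 3
        + 720 * p ^ 2 * (g + h) ^ 2 + 56 * q * (g + h) ^ 3
        + 24 * t * q ^ 2 * (g + h) + 252 * t * p ^ 2 * q
        + 24 * p * q * (25 * g ^ 2 + 44 * g * h + 19 * h ^ 2)
        + 104 * p ^ 3 * (17 * g + 15 * h) + 60 * t * p * q ^ 2
        + 24 * q ^ 2 * (3 * g ^ 2 + 5 * g * h + 2 * h ^ 2)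
        + 12 * p ^ 2 * q * (110 * g + 89 * h) + 972 * p ^ 4
        + 4 * t * q ^ 3 + 12 * p * q ^ 2 * (22 * g + 17 * h)
        + 776 * p ^ 3 * q + 4 * q ^ 3 * (4 * g + 3 * h)
        + 210 * p ^ 2 * q ^ 2 + 24 * p * q ^ 3 + q ^ 4 }

end CommSemiring

/-- The positivity of the counts that is preserved by `next`; the counts `g` and `h` may vanish. -/
structure Admissible {R : Type*} [Zero R] [Preorder R] (x : ForestCounts R) : Prop where
  t_pos : 0 < x.t
  g_nonneg : 0 ≤ x.g
  h_nonneg : 0 ≤ x.h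
  p_pos : 0 < x.p
  q_pos : 0 < x.q

namespace Admissible

section CommSemiring

variable {R : Type*} [CommSemiring R] [PartialOrder R] [IsStrictOrderedRing R]
  {x : ForestCounts R}

protected theorem next (hx : x.Admissible) : x.next.Admissible := by
  obtain ⟨t, g, h, p, q⟩ := x
  obtain ⟨ht : 0 < t, hg : 0 ≤ g, hh : 0 ≤ h, hp : 0 < p, hq : 0 < q⟩ := hx
  constructor <;> dsimp only [ForestCounts.next] <;> positivity

theorem q_le_total (hx : x.Admissible) : x.q ≤ x.total := by
  obtain ⟨t, g, h, p, q⟩ := x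
  obtain ⟨ht : 0 < t, hg : 0 ≤ g, hh : 0 ≤ h, hp : 0 < p, -⟩ := hx
  exact le_add_of_nonneg_left (by positivity)

theorem q_pow_four_lt_q_next (hx : x.Admissible) : x.q ^ 4 < x.next.q := by
  obtain ⟨t, g, h, p, q⟩ := x
  obtain ⟨ht : 0 < t, hg : 0 ≤ g, hh : 0 ≤ h, hp : 0 < p, hq : 0 < q⟩ := hx
  exact lt_add_of_pos_left _ (by positivity)

end CommSemiring

theorem total_next_lt_total_pow_four {R : Type*} [CommRing R] [PartialOrder R]
    [IsStrictOrderedRing R] {x : ForestCounts R} (hx : x.Admissible) :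
    x.next.total < x.total ^ 4 := by
  obtain ⟨t, g, h, p, q⟩ := x
  obtain ⟨ht : 0 < t, hg : 0 ≤ g, hh : 0 ≤ h, hp : 0 < p, hq : 0 < q⟩ := hx
  rw [← sub_pos]
  dsimp only [ForestCounts.next, total]
  -- All monomials of the expanded difference have positive coefficients, and `t ^ 4` occurs.
  ring_nf
  positivity

end Admissible

end ForestCounts

theorem sg3_growth_constant_bounds_general (x : ℕ → ForestCounts ℝ) (hx0 : (x 0).Admissible)
    (hx : ∀ n, x (n + 1) = (x n).next) :
    ∃ z : ℝ,
      Tendsto (fun n : ℕ => Real.log (x n).total / (2 * ((4 : ℝ) ^ n + 1))) atTop (nhds z) ∧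
      ∀ m : ℕ,
        1 / (2 * (4 : ℝ) ^ m) * Real.log (x m).q < z ∧
        z < 1 / (2 * (4 : ℝ) ^ m) * Real.log (x m).total := by
  have hadm (n : ℕ) : (x n).Admissible := by
    induction n with
    | zero => exact hx0
    | succ n ih => exact hx n ▸ ih.next
  have htotal_pos (n : ℕ) : 0 < (x n).total := (hadm n).q_pos.trans_le (hadm n).q_le_total
  have hmono : StrictMono fun n => Real.log (x n).q / (4 : ℕ) ^ n :=
    strictMono_log_div_pow four_ne_zero (fun n => (hadm n).q_pos)
      fun n => hx n ▸ (hadm n).q_pow_four_lt_q_next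
  have hanti : StrictAnti fun n => Real.log (x n).total / (4 : ℕ) ^ n :=
    strictAnti_log_div_pow four_ne_zero htotal_pos
      fun n => hx n ▸ (hadm n).total_next_lt_total_pow_four
  obtain ⟨z, hz, hbounds⟩ := exists_tendsto_between_of_strictMono_of_strictAnti hmono hanti
    fun n => div_le_div_of_nonneg_right
      (Real.log_le_log (hadm n).q_pos (hadm n).q_le_total) (by positivity)
  rw [Nat.cast_ofNat] at hz hbounds
  have hscale (m : ℕ) (y : ℝ) : 1 / (2 * (4 : ℝ) ^ m) * y = y / 4 ^ m / 2 := by ring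
  refine ⟨z / 2, ?_, fun m => ?_⟩
  · have hpow : Tendsto (fun n : ℕ => (4 : ℝ) ^ n) atTop atTop :=
      tendsto_pow_atTop_atTop_of_one_lt (by norm_num)
    simpa only [div_div, mul_comm] using (tendsto_div_add_const hz hpow 1).div_const 2
  · simpa only [hscale, div_lt_div_iff_of_pos_right (zero_lt_two' ℝ)] using hbounds m

/-- The asymptotic growth constant `z = lim ln f(n) / (2 (4^n + 1))` exists and satisfies
`(1/(2·4^m)) ln q(m) < z < (1/(2·4^m)) ln f(m)` for every `m ≥ 1`. -/
theorem sg3_growth_constant_bounds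
    (t g h p q f : ℕ → ℕ)
    (ht0 : t 0 = 16) (hg0 : g 0 = 3) (hh0 : h 0 = 1) (hp0 : p 0 = 1) (hq0 : q 0 = 1)
    (ht : ∀ n, t (n + 1) =
        72 * t n ^ 2 * p n * (g n + h n) + 56 * t n * (g n + h n) ^ 3
        + 24 * t n ^ 2 * p n ^ 2
        + 12 * t n * p n * (11 * g n ^ 2 + 12 * g n * h n + h n ^ 2)
        + 12 * g n ^ 2 * (3 * g n ^ 2 + 8 * g n * h n + 6 * h n ^ 2)
        + 12 * t n * p n ^ 2 * (4 * g n + h n) + 48 * g n ^ 2 * p n * (g n + h n)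
        + 4 * t n * p n ^ 3 + 12 * g n ^ 2 * p n ^ 2)
    (hg : ∀ n, g (n + 1) =
        6 * t n ^ 2 * q n * (g n + h n) + 24 * t n ^ 2 * p n ^ 2
        + 12 * t n * p n * (9 * g n ^ 2 + 16 * g n * h n + 7 * h n ^ 2)
        + 4 * g n * (5 * g n ^ 3 + 18 * g n ^ 2 * h n + 24 * g n * h n ^ 2 + 14 * h n ^ 3)
        + 6 * t n ^ 2 * p n * q n + 6 * t n * p n ^ 2 * (21 * g n + 11 * h n)
        + 3 * t n * q n * (5 * g n ^ 2 + 6 * g n * h n + h n ^ 2)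
        + 24 * g n * p n * (5 * g n ^ 2 + 9 * g n * h n + 4 * h n ^ 2)
        + 6 * t n * p n * q n * (3 * g n + h n) + 21 * t n * p n ^ 3
        + 6 * g n * p n ^ 2 * (19 * g n + 13 * h n)
        + 3 * g n * q n * (3 * g n ^ 2 + 4 * g n * h n + h n ^ 2)
        + 3 * t n * p n ^ 2 * q n + 6 * g n * p n * q n * (2 * g n + h n)
        + 25 * g n * p n ^ 3 + 3 * g n * p n ^ 2 * q n)
    (hh : ∀ n, h (n + 1) =
        2 * t n ^ 2 * p n ^ 2
        + 12 * t n * p n * (g n ^ 2 + 4 * g n * h n + 3 * h n ^ 2)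
        + 2 * (g n ^ 4 + 8 * g n ^ 3 * h n + 18 * g n ^ 2 * h n ^ 2
            + 16 * g n * h n ^ 3 + 11 * h n ^ 4)
        + 8 * t n * p n ^ 2 * (2 * g n + 3 * h n)
        + 8 * p n * (2 * g n ^ 3 + 9 * g n ^ 2 * h n + 9 * g n * h n ^ 2 + 2 * h n ^ 3)
        + 4 * t n * p n ^ 3
        + 2 * p n ^ 2 * (10 * g n ^ 2 + 24 * g n * h n + 9 * h n ^ 2)
        + 8 * p n ^ 3 * (g n + h n) + p n ^ 4)
    (hp : ∀ n, p (n + 1) =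
        6 * t n ^ 2 * p n * q n + 120 * t n * p n ^ 2 * (g n + h n)
        + 14 * t n * q n * (g n + h n) ^ 2 + 88 * p n * (g n + h n) ^ 3
        + 4 * t n * p n * q n * (13 * g n + 10 * h n) + 78 * t n * p n ^ 3
        + 6 * p n ^ 2 * (49 * g n ^ 2 + 78 * g n * h n + 29 * h n ^ 2)
        + 2 * q n * (11 * g n ^ 3 + 26 * g n ^ 2 * h n + 19 * g n * h n ^ 2 + 4 * h n ^ 3)
        + t n ^ 2 * q n ^ 2 + 2 * t n * q n ^ 2 * (2 * g n + h n)
        + 26 * t n * p n ^ 2 * q n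
        + 2 * p n * q n * (38 * g n ^ 2 + 50 * g n * h n + 15 * h n ^ 2)
        + 2 * p n ^ 3 * (115 * g n + 76 * h n) + 2 * t n * p n * q n ^ 2
        + q n ^ 2 * (4 * g n ^ 2 + 4 * g n * h n + h n ^ 2)
        + 2 * p n ^ 2 * q n * (31 * g n + 18 * h n) + 49 * p n ^ 4
        + 2 * p n * q n ^ 2 * (2 * g n + h n) + 14 * p n ^ 3 * q n + p n ^ 2 * q n ^ 2)
    (hq : ∀ n, q (n + 1) =
        144 * t n * p n * q n * (g n + h n) + 208 * t n * p n ^ 3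
        + 720 * p n ^ 2 * (g n + h n) ^ 2 + 56 * q n * (g n + h n) ^ 3
        + 24 * t n * q n ^ 2 * (g n + h n) + 252 * t n * p n ^ 2 * q n
        + 24 * p n * q n * (25 * g n ^ 2 + 44 * g n * h n + 19 * h n ^ 2)
        + 104 * p n ^ 3 * (17 * g n + 15 * h n) + 60 * t n * p n * q n ^ 2
        + 24 * q n ^ 2 * (3 * g n ^ 2 + 5 * g n * h n + 2 * h n ^ 2)
        + 12 * p n ^ 2 * q n * (110 * g n + 89 * h n) + 972 * p n ^ 4
        + 4 * t n * q n ^ 3 + 12 * p n * q n ^ 2 * (22 * g n + 17 * h n)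
        + 776 * p n ^ 3 * q n + 4 * q n ^ 3 * (4 * g n + 3 * h n)
        + 210 * p n ^ 2 * q n ^ 2 + 24 * p n * q n ^ 3 + q n ^ 4)
    (hf : ∀ n, f n = t n + 4 * g n + 3 * h n + 6 * p n + q n) :
    ∃ z : ℝ,
      Tendsto (fun n : ℕ => Real.log (f n) / (2 * ((4 : ℝ) ^ n + 1))) atTop (nhds z) ∧
      ∀ m : ℕ, 1 ≤ m →
        1 / (2 * (4 : ℝ) ^ m) * Real.log (q m) < z ∧
        z < 1 / (2 * (4 : ℝ) ^ m) * Real.log (f m) := by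
  obtain ⟨z, hz, hbounds⟩ := sg3_growth_constant_bounds_general
    (fun n => ⟨t n, g n, h n, p n, q n⟩) (by constructor <;> simp [*])
    fun n => by simp only [ForestCounts.next, ht, hg, hh, hp, hq]; push_cast; rfl
  simp only [hf]
  push_cast
  exact ⟨z, hz, fun m _ => hbounds m⟩
end
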